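/- There exists a 2-(24,4,1) packing with 42 blocks whose leave is a vertex-disjoint union of two cycles of length 3 and one cycle of length 18, covering all 24 points (leave type 3^2 18^1). -/

import Mathlib

/-!
The packing is exhibited explicitly. The leave is prescribed to consist of the triangles
`0, 1, 2` and `3, 4, 5` and the 18-cycle `6, 7, …, 23`, and the packing is taken invariant under
the permutation of order 3 that rotates each of these cycles by a third of its length, that is,
`(0 1 2)(3 4 5)` times the cyclic shift by 6 on `6, …, 23`. The 252 pairs off the leave form 84
orbits, and 14 block orbits of length 3 cover each of them exactly once.

What remains is a finite verification on lists of points: blocks have size 4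
(`nodup_length_of_mem_blockList`), distinct blocks share at most one point
(`length_filter_le_one`), and two points are in no common block exactly when one is the successor
`next` of the other on a leave cycle (`uncovered_iff`).
-/

/-- A 2-(24,4,1) packing: a collection of 4-element blocks on 24 points such that
every pair of distinct points lies in at most one block. -/
def IsPacking (B : Finset (Finset (Fin 24))) : Prop :=
  (∀ b ∈ B, b.card = 4) ∧
  ∀ p q : Fin 24, p ≠ q → ∀ b₁ ∈ B, ∀ b₂ ∈ B,
    p ∈ b₁ → q ∈ b₁ → p ∈ b₂ → q ∈ b₂ → b₁ = b₂

/-- Adjacency in the leave of a packing: the pair of distinct points is covered by no block. -/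
def LeaveAdj (B : Finset (Finset (Fin 24))) (p q : Fin 24) : Prop :=
  p ≠ q ∧ ∀ b ∈ B, ¬ (p ∈ b ∧ q ∈ b)

/-- The leave of the packing `B` is a vertex-disjoint union of cycles whose lengths are
given by the list `L`, covering all 24 points. -/
def LeaveIsCycleType (B : Finset (Finset (Fin 24))) (L : List ℕ) : Prop :=
  ∃ f : (i : Fin L.length) → ZMod (L.get i) → Fin 24,
    Function.Bijective (fun x : Σ i : Fin L.length, ZMod (L.get i) => f x.1 x.2) ∧
    ∀ p q : Fin 24, LeaveAdj B p q ↔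
      ∃ i k, (p = f i k ∧ q = f i (k + 1)) ∨ (q = f i k ∧ p = f i (k + 1))

/-- The 42 blocks as lists of points; each row is one orbit of the automorphism of order 3. -/
def blockList : List (List (Fin 24)) :=
  [[0, 3, 6, 8], [1, 4, 12, 14], [2, 5, 18, 20],
   [0, 4, 13, 18], [1, 5, 19, 6], [2, 3, 7, 12],
   [0, 5, 9, 17], [1, 3, 15, 23], [2, 4, 21, 11],
   [0, 7, 10, 19], [1, 13, 16, 7], [2, 19, 22, 13],
   [0, 11, 15, 22], [1, 17, 21, 10], [2, 23, 9, 16],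
   [0, 12, 16, 20], [1, 18, 22, 8], [2, 6, 10, 14],
   [0, 14, 21, 23], [1, 20, 9, 11], [2, 8, 15, 17],
   [3, 9, 14, 18], [4, 15, 20, 6], [5, 21, 8, 12],
   [3, 10, 20, 22], [4, 16, 8, 10], [5, 22, 14, 16],
   [3, 11, 13, 17], [4, 17, 19, 23], [5, 23, 7, 11],
   [3, 16, 19, 21], [4, 22, 7, 9], [5, 10, 13, 15],
   [6, 9, 13, 21], [12, 15, 19, 9], [18, 21, 7, 15],
   [6, 11, 16, 18], [12, 17, 22, 6], [18, 23, 10, 12],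
   [7, 14, 17, 20], [13, 20, 23, 8], [19, 8, 11, 14]]

theorem nodup_length_of_mem_blockList : ∀ l ∈ blockList, l.Nodup ∧ l.length = 4 := by
  decide +kernel

theorem length_filter_le_one : ∀ l₁ ∈ blockList, ∀ l₂ ∈ blockList,
    l₁ = l₂ ∨ (l₁.filter (· ∈ l₂)).length ≤ 1 := by
  decide +kernel

/-- Two listed blocks sharing two distinct points are equal. -/
theorem eq_of_mem_of_mem {l₁ l₂ : List (Fin 24)} (h₁ : l₁ ∈ blockList) (h₂ : l₂ ∈ blockList)
    {p q : Fin 24} (hpq : p ≠ q) (hp₁ : p ∈ l₁) (hq₁ : q ∈ l₁) (hp₂ : p ∈ l₂) (hq₂ : q ∈ l₂) :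
    l₁ = l₂ := by
  refine (length_filter_le_one l₁ h₁ l₂ h₂).resolve_right fun hle => hpq ?_
  have hp : p ∈ l₁.filter (· ∈ l₂) := by simp [hp₁, hp₂]
  have hq : q ∈ l₁.filter (· ∈ l₂) := by simp [hq₁, hq₂]
  have hcard := (List.toFinset_card_le (l₁.filter (· ∈ l₂))).trans hle
  exact Finset.card_le_one.mp hcard p (List.mem_toFinset.mpr hp) q (List.mem_toFinset.mpr hq)

/-- The packing, as a set of sets of points. -/
def blocks : Finset (Finset (Fin 24)) :=
  (blockList.map List.toFinset).toFinset

theorem mem_blocks {b : Finset (Fin 24)} : b ∈ blocks ↔ ∃ l ∈ blockList, l.toFinset = b := by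
  simp [blocks]

theorem isPacking_blocks : IsPacking blocks := by
  refine ⟨fun b hb => ?_, fun p q hpq b₁ hb₁ b₂ hb₂ hp₁ hq₁ hp₂ hq₂ => ?_⟩
  · obtain ⟨l, hl, rfl⟩ := mem_blocks.mp hb
    obtain ⟨hnodup, hlength⟩ := nodup_length_of_mem_blockList l hl
    rw [List.toFinset_card_of_nodup hnodup, hlength]
  · obtain ⟨l₁, h₁, rfl⟩ := mem_blocks.mp hb₁
    obtain ⟨l₂, h₂, rfl⟩ := mem_blocks.mp hb₂
    rw [List.mem_toFinset] at hp₁ hq₁ hp₂ hq₂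
    rw [eq_of_mem_of_mem h₁ h₂ hpq hp₁ hq₁ hp₂ hq₂]

theorem card_blocks : blocks.card = 42 := by
  have hnodup : blockList.Nodup := by decide +kernel
  have hmap : (blockList.map List.toFinset).Nodup := by
    refine hnodup.map_on fun l₁ h₁ l₂ h₂ heq => ?_
    -- A block has two distinct points, and both of them lie in the other block as well.
    obtain ⟨hn, hlength⟩ := nodup_length_of_mem_blockList l₁ h₁
    have hlt : 1 < l₁.toFinset.card := by
      rw [List.toFinset_card_of_nodup hn, hlength]
      norm_num
    obtain ⟨p, hp, q, hq, hpq⟩ := Finset.one_lt_card.mp hlt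
    have hp₂ := heq ▸ hp
    have hq₂ := heq ▸ hq
    rw [List.mem_toFinset] at hp hq hp₂ hq₂
    exact eq_of_mem_of_mem h₁ h₂ hpq hp hq hp₂ hq₂
  rw [blocks, List.toFinset_card_of_nodup hmap, List.length_map]
  rfl

/-- The successor of a point on its leave cycle. -/
def next (p : Fin 24) : Fin 24 :=
  if p = 2 then 0 else if p = 5 then 3 else if p = 23 then 6 else p + 1

theorem uncovered_iff : ∀ p q : Fin 24,
    (p ≠ q ∧ ∀ l ∈ blockList, ¬ (p ∈ l ∧ q ∈ l)) ↔ q = next p ∨ p = next q := by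
  decide +kernel

theorem leaveAdj_blocks_iff (p q : Fin 24) :
    LeaveAdj blocks p q ↔ q = next p ∨ p = next q := by
  rw [← uncovered_iff]
  simp [LeaveAdj, mem_blocks]

/-- Makes each `ZMod` indexing a cycle a finite type, so that statements about the cycles are
decidable. -/
instance neZero_cycleLength (i : Fin [3, 3, 18].length) : NeZero ([3, 3, 18].get i) :=
  ⟨by revert i; decide⟩

/-- The cycles of the leave: cycle `i` runs through consecutive points, starting at `0`, `3` and
`6` respectively. -/
def leaveCycle (i : Fin [3, 3, 18].length) (k : ZMod ([3, 3, 18].get i)) : Fin 24 :=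
  Fin.ofNat 24 ([0, 3, 6].get i + k.val)

theorem leaveCycle_bijective : Function.Bijective
    (fun x : Σ i : Fin [3, 3, 18].length, ZMod ([3, 3, 18].get i) => leaveCycle x.1 x.2) := by
  decide +kernel

theorem leaveCycle_add_one : ∀ i k, leaveCycle i (k + 1) = next (leaveCycle i k) := by
  decide +kernel

/-- There is a 2-(24,4,1) packing with 42 blocks whose leave is a vertex-disjoint
union of cycles of lengths [3, 3, 18], covering all 24 points. -/
theorem exists_max_packing_with_leave_type :
    ∃ B : Finset (Finset (Fin 24)), IsPacking B ∧ B.card = 42 ∧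
      LeaveIsCycleType B [3, 3, 18] := by
  refine ⟨blocks, isPacking_blocks, card_blocks, leaveCycle, leaveCycle_bijective, fun p q => ?_⟩
  simp only [leaveAdj_blocks_iff, leaveCycle_add_one]
  constructor
  · rintro (h | h)
    · obtain ⟨⟨i, k⟩, hk⟩ := leaveCycle_bijective.surjective p
      exact ⟨i, k, Or.inl ⟨hk.symm, h.trans (congrArg next hk.symm)⟩⟩
    · obtain ⟨⟨i, k⟩, hk⟩ := leaveCycle_bijective.surjective q
      exact ⟨i, k, Or.inr ⟨hk.symm, h.trans (congrArg next hk.symm)⟩⟩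
  · rintro ⟨i, k, ⟨rfl, rfl⟩ | ⟨rfl, rfl⟩⟩
    · exact Or.inl rfl
    · exact Or.inr rfl
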